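/- (Lemma 3.2.) Let k ≥ 1, let x ∈ A_k, let d = dist(x, y) for some y ∈ A_k, and suppose there exists z ∈ A_k ∩ B̄(x,d) with i₁^z ≠ i₁^x. Then there exists d' ∈ [c, R] such that (x, d') ∈ 𝒜 and: (i) d' ≤ d + R·r_max^k, (ii) μ_k(B̄(x,d)) ≤ μ(B̄(x,d')). -/

import Mathlib

/-!
The radius `d' = min R (d + R * rmax ^ (k + 1))` works. Iterating the self-similarity of `μ` gives
`μ B = ∑ w, r_w ^ s * μ (f_w ⁻¹' B)` over the words `w` of length `k + 1`
(`measure_eq_sum_words`). If the atom of the discrete measure belonging to `w` lies in the closed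
ball of radius `d` about `x`, then all of `f_w '' E` lies in the closed ball `B` of radius `d'`:
its diameter is at most `R * rmax ^ (k + 1)`, and it is contained in `E`, all of whose points are
within `R` of `x`. Hence `μ (f_w ⁻¹' B) ≥ μ E = 1`, and the two sums are compared term by term
(`muk_apply_le`).

The points `x` and `z` lie in different first-level pieces, so
`c ≤ dist x z ≤ min R d`. This yields `c ≤ d'`, and the ball of radius `d'` still contains `z`.
-/

open MeasureTheory Metric Set

noncomputable section

/-- Composition of the maps of the IFS along a word (list of letters). -/
def fword {m : ℕ} {X : Type*} (f : Fin m → X → X) : List (Fin m) → X → X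
  | [] => id
  | i :: w => f i ∘ fword f w

/-- Product of the contraction ratios along a word. -/
def rword {m : ℕ} (r : Fin m → ℝ) (w : List (Fin m)) : ℝ := (w.map r).prod

/-- The point clouds: `cloud f p k` is the set `A_{k+1}` of the paper
(`cloud f p 0 = A₁` is the set of fixed points). -/
def cloud {m : ℕ} {X : Type*} (f : Fin m → X → X) (p : Fin m → X) : ℕ → Set X
  | 0 => Set.range p
  | k + 1 => ⋃ i, f i '' cloud f p k

/-- The discrete measure: `muk f p r s k` is the measure `μ_{k+1}` of the paper,
supported on `cloud f p k = A_{k+1}`. -/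
def muk {m : ℕ} {X : Type*} [MeasurableSpace X] (f : Fin m → X → X) (p : Fin m → X)
    (r : Fin m → ℝ) (s : ℝ) (k : ℕ) : Measure X :=
  ∑ w : Fin (k + 1) → Fin m,
    ENNReal.ofReal ((∏ j, r (w j)) ^ s) •
      Measure.dirac (fword f (List.ofFn w) (p (w (Fin.last k))))

section Helpers

variable {X : Type*} {m : ℕ} {f : Fin m → X → X} {r : Fin m → ℝ} {E : Set X}

/-- The fixed point lies in every closed set that is mapped into itself, as a limit of iterates. -/
lemma fixedPoint_mem [MetricSpace X] {g : X → X} {q : X} {t : ℝ} (ht : t ∈ Set.Ioo (0 : ℝ) 1)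
    (hg : ∀ x y, dist (g x) (g y) = t * dist x y) (hq : g q = q)
    (hne : E.Nonempty) (hcl : IsClosed E) (hmaps : ∀ x ∈ E, g x ∈ E) : q ∈ E := by
  obtain ⟨e, he⟩ := hne
  have hmem : ∀ N : ℕ, g^[N] e ∈ E := by
    intro N
    induction N with
    | zero => exact he
    | succ N ih => rw [Function.iterate_succ_apply']; exact hmaps _ ih
  have hdist : ∀ N : ℕ, dist (g^[N] e) q = t ^ N * dist e q := by
    intro N
    induction N with
    | zero => simp
    | succ N ih =>
      rw [Function.iterate_succ_apply']
      nth_rewrite 1 [← hq]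
      rw [hg, ih]; ring
  refine hcl.mem_of_tendsto (b := Filter.atTop) (f := fun N => g^[N] e) ?_
    (Filter.Eventually.of_forall hmem)
  rw [tendsto_iff_dist_tendsto_zero]
  simp only [hdist]
  simpa using (tendsto_pow_atTop_nhds_zero_of_lt_one ht.1.le ht.2).mul_const (dist e q)

lemma fword_mem (hmaps : ∀ i, ∀ x ∈ E, f i x ∈ E) (l : List (Fin m)) :
    ∀ x ∈ E, fword f l x ∈ E := by
  induction l with
  | nil => exact fun x hx => hx
  | cons i l ih => exact fun x hx => hmaps i _ (ih x hx)

lemma cloud_subset {p : Fin m → X} (hmaps : ∀ i, ∀ x ∈ E, f i x ∈ E) (hp : ∀ i, p i ∈ E)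
    (k : ℕ) : cloud f p k ⊆ E := by
  induction k with
  | zero => rintro _ ⟨i, rfl⟩; exact hp i
  | succ k ih =>
    intro x hx
    simp only [cloud, Set.mem_iUnion] at hx
    obtain ⟨i, y, hy, rfl⟩ := hx
    exact hmaps i y (ih hy)

lemma dist_fword_le [MetricSpace X] {t : ℝ} (hrt : ∀ i, r i ≤ t)
    (ht : 0 ≤ t) (hsim : ∀ i x y, dist (f i x) (f i y) = r i * dist x y) (l : List (Fin m))
    (x y : X) : dist (fword f l x) (fword f l y) ≤ t ^ l.length * dist x y := by
  induction l with
  | nil => simp [fword]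
  | cons i l ih =>
    simp only [fword, Function.comp, hsim, List.length_cons, pow_succ']
    rw [mul_assoc]
    exact mul_le_mul (hrt i) ih dist_nonneg ht

/-- The self-similarity relation of `μ`, iterated along all words of length `k`. -/
lemma measure_eq_sum_words [MeasurableSpace X] {s : ℝ} {μ : Measure X} (hr : ∀ i, 0 ≤ r i)
    (hf : ∀ i, Measurable (f i))
    (hself : ∀ A : Set X, MeasurableSet A →
      μ A = ∑ i, ENNReal.ofReal (r i ^ s) * μ (f i ⁻¹' A)) (k : ℕ) :
    ∀ A : Set X, MeasurableSet A →
      μ A = ∑ w : Fin k → Fin m,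
        ENNReal.ofReal ((∏ j, r (w j)) ^ s) * μ (fword f (List.ofFn w) ⁻¹' A) := by
  induction k with
  | zero => intro A _; simp [fword]
  | succ k ih =>
    intro A hA
    rw [hself A hA, ← (Fin.consEquiv fun _ : Fin (k + 1) => Fin m).sum_comp,
      Fintype.sum_prod_type]
    refine Finset.sum_congr rfl fun i _ => ?_
    rw [ih _ (hf i hA), Finset.mul_sum]
    refine Finset.sum_congr rfl fun w _ => ?_
    simp only [Fin.consEquiv, Equiv.coe_fn_mk, Fin.prod_univ_succ, Fin.cons_zero, Fin.cons_succ,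
      List.ofFn_succ, fword]
    rw [Real.mul_rpow (hr i) (Finset.prod_nonneg fun j _ => hr _),
      ENNReal.ofReal_mul (Real.rpow_nonneg (hr i) s), mul_assoc]
    rfl

/-- If `f_w '' E ⊆ B` for every word `w` whose atom lies in `A`, then `muk A ≤ μ B`. -/
lemma muk_apply_le [MeasurableSpace X] {p : Fin m → X} {s : ℝ} {μ : Measure X}
    (hr : ∀ i, 0 ≤ r i) (hf : ∀ i, Measurable (f i))
    (hself : ∀ A : Set X, MeasurableSet A →
      μ A = ∑ i, ENNReal.ofReal (r i ^ s) * μ (f i ⁻¹' A)) (hμE : μ E = 1) (k : ℕ)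
    {A B : Set X} (hA : MeasurableSet A) (hB : MeasurableSet B)
    (hAB : ∀ w : Fin (k + 1) → Fin m, fword f (List.ofFn w) (p (w (Fin.last k))) ∈ A →
      ∀ e ∈ E, fword f (List.ofFn w) e ∈ B) :
    muk f p r s k A ≤ μ B := by
  rw [measure_eq_sum_words hr hf hself (k + 1) B hB, muk, Measure.finsetSum_apply]
  refine Finset.sum_le_sum fun w _ => ?_
  rw [Measure.smul_apply, smul_eq_mul]
  refine mul_le_mul_right ?_ _
  rw [Measure.dirac_apply' _ hA]
  refine Set.indicator_apply_le' (fun hw => ?_) fun _ => zero_le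
  rw [Pi.one_apply, ← hμE]
  exact measure_mono fun e he => hAB w hw e he

end Helpers

theorem stmt11
    (n m : ℕ) (hn : 1 ≤ n) (hm : 2 ≤ m)
    (f : Fin m → EuclideanSpace ℝ (Fin n) → EuclideanSpace ℝ (Fin n))
    (r : Fin m → ℝ) (hr : ∀ i, r i ∈ Set.Ioo (0 : ℝ) 1)
    (hsim : ∀ i x y, dist (f i x) (f i y) = r i * dist x y)
    (E : Set (EuclideanSpace ℝ (Fin n)))
    (hEne : E.Nonempty) (hEcpt : IsCompact E)
    (hEinv : E = ⋃ i, f i '' E)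
    (hssc : ∀ i j, i ≠ j → f i '' E ∩ f j '' E = ∅)
    (s : ℝ) (hs : 0 < s) (hsum : ∑ i, r i ^ s = 1)
    (μ : Measure (EuclideanSpace ℝ (Fin n)))
    (hμprob : IsProbabilityMeasure μ) (hμE : μ E = 1)
    (hμself : ∀ A : Set (EuclideanSpace ℝ (Fin n)), MeasurableSet A →
      μ A = ∑ i, ENNReal.ofReal (r i ^ s) * μ (f i ⁻¹' A))
    (p : Fin m → EuclideanSpace ℝ (Fin n)) (hp : ∀ i, f i (p i) = p i)
    (rmin rmax : ℝ)
    (hrmin₁ : ∃ i, rmin = r i) (hrmin₂ : ∀ i, rmin ≤ r i)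
    (hrmax₁ : ∃ i, rmax = r i) (hrmax₂ : ∀ i, r i ≤ rmax)
    (c R : ℝ) (hcpos : 0 < c)
    (hc : c = sInf {d : ℝ | ∃ i j, i ≠ j ∧ ∃ x ∈ f i '' E, ∃ y ∈ f j '' E, d = dist x y})
    (hR : R = Metric.diam E)
    (ι : EuclideanSpace ℝ (Fin n) → Fin m)
    (hι : ∀ x ∈ E, x ∈ f (ι x) '' E) :
    ∀ k : ℕ, ∀ x ∈ cloud f p k, ∀ y ∈ cloud f p k,
      (∃ z ∈ cloud f p k ∩ Metric.closedBall x (dist x y), ι z ≠ ι x) →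
      ∃ d' ∈ Set.Icc c R,
        (x ∈ E ∧ ∃ j, j ≠ ι x ∧ (Metric.closedBall x d' ∩ f j '' E).Nonempty) ∧
        d' ≤ dist x y + R * rmax ^ (k + 1) ∧
        muk f p r s k (Metric.closedBall x (dist x y)) ≤ μ (Metric.closedBall x d') := by
  have hmaps : ∀ i, ∀ x ∈ E, f i x ∈ E := by
    intro i x hx
    rw [hEinv]
    exact Set.mem_iUnion.2 ⟨i, x, hx, rfl⟩
  have hpE : ∀ i, p i ∈ E := fun i =>
    fixedPoint_mem (hr i) (hsim i) (hp i) hEne hEcpt.isClosed (hmaps i)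
  have hr0 : ∀ i, 0 ≤ r i := fun i => (hr i).1.le
  have ht : 0 ≤ rmax := by
    obtain ⟨i, rfl⟩ := hrmax₁
    exact hr0 i
  have hdiam : ∀ a ∈ E, ∀ b ∈ E, dist a b ≤ R := by
    intro a ha b hb
    rw [hR]
    exact Metric.dist_le_diam_of_mem hEcpt.isBounded ha hb
  have hf : ∀ i, Measurable (f i) := fun i =>
    (LipschitzWith.of_dist_le_mul (K := ⟨r i, hr0 i⟩)
      fun a b => (hsim i a b).le).continuous.measurable
  intro k x hx y _ hz
  obtain ⟨z, ⟨hzA, hzx⟩, hιz⟩ := hz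
  have hxE : x ∈ E := cloud_subset hmaps hpE k hx
  have hzE : z ∈ E := cloud_subset hmaps hpE k hzA
  rw [Metric.mem_closedBall] at hzx
  have hRpos : 0 ≤ R := dist_nonneg.trans (hdiam x hxE x hxE)
  have hpow : 0 ≤ R * rmax ^ (k + 1) := by positivity
  have hcz : c ≤ dist z x := by
    rw [hc]
    refine csInf_le ⟨0, ?_⟩ ⟨ι z, ι x, hιz, z, hι z hzE, x, hι x hxE, rfl⟩
    rintro _ ⟨_, _, _, a, _, b, _, rfl⟩
    exact dist_nonneg
  have hzd : dist z x ≤ min R (dist x y + R * rmax ^ (k + 1)) :=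
    le_min (hdiam z hzE x hxE) (by linarith)
  refine ⟨min R (dist x y + R * rmax ^ (k + 1)), ⟨hcz.trans hzd, min_le_left _ _⟩,
    ⟨hxE, ι z, hιz, z, Metric.mem_closedBall.2 hzd, hι z hzE⟩, min_le_right _ _, ?_⟩
  refine muk_apply_le hr0 hf hμself hμE k Metric.isClosed_closedBall.measurableSet
    Metric.isClosed_closedBall.measurableSet fun w hw e he => ?_
  rw [Metric.mem_closedBall] at hw
  refine Metric.mem_closedBall.2 (le_min (hdiam _ (fword_mem hmaps _ e he) x hxE) ?_)
  have h1 := dist_fword_le hrmax₂ ht hsim (List.ofFn w) e (p (w (Fin.last k)))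
  rw [List.length_ofFn] at h1
  have h2 := mul_le_mul_of_nonneg_left (hdiam e he _ (hpE (w (Fin.last k))))
    (pow_nonneg ht (k + 1))
  have h3 := dist_triangle (fword f (List.ofFn w) e)
    (fword f (List.ofFn w) (p (w (Fin.last k)))) x
  linarith
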